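/- Let σ₃ be the morphism on binary words defined by σ₃(0) = 0001 and σ₃(1) = 101. For every n ≥ 0, the word σ₃ⁿ(0) avoids abelian 4-powers cyclically. Consequently there exist arbitrarily long binary words avoiding abelian 4-powers cyclically, i.e. A_∞(2) ≤ 4. -/

import Mathlib

/-- `u` is an abelian `N`-power of period `m`: a concatenation of `N` nonempty
pairwise abelian-equivalent words of common length `m`. -/
def IsAbelianPower {α : Type*} (N m : ℕ) (u : List α) : Prop :=
  0 < m ∧ ∃ f : Fin N → List α,
    u = (List.ofFn f).flatten ∧ (∀ i, (f i).length = m) ∧ ∀ i j, List.Perm (f i) (f j)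

/-- `u` occurs in the infinite word `w^ω`, i.e. `u` is a factor of `w^k` for some `k`. -/
def OccursCyc {α : Type*} (w u : List α) : Prop :=
  ∃ k : ℕ, u <:+: (List.replicate k w).flatten

/-- `w` avoids abelian `N`-powers cyclically: every abelian `N`-power of period `m`
occurring in `w^ω` satisfies `m ≥ |w|`. -/
def AvoidsAbelianCyc {α : Type*} (N : ℕ) (w : List α) : Prop :=
  ∀ m u, IsAbelianPower N m u → OccursCyc w u → w.length ≤ m

/-- Application of a morphism given by its images on letters. -/
def applyMorphism {α β : Type*} (σ : α → List β) (w : List α) : List β :=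
  (w.map σ).flatten

/-- Dekking-style morphism σ₃ : 0 ↦ 0001, 1 ↦ 101. -/
def sigma3 : Fin 2 → List (Fin 2) := fun a => if a = 0 then [0, 0, 0, 1] else [1, 0, 1]

namespace Sigma3Aux

lemma am_nil : applyMorphism sigma3 [] = [] := rfl

lemma am_cons (a : Fin 2) (w : List (Fin 2)) :
    applyMorphism sigma3 (a :: w) = sigma3 a ++ applyMorphism sigma3 w := by
  simp [applyMorphism]

lemma am_append (v w : List (Fin 2)) :
    applyMorphism sigma3 (v ++ w) = applyMorphism sigma3 v ++ applyMorphism sigma3 w := by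
  simp [applyMorphism]

lemma am_replicate (k : ℕ) (w : List (Fin 2)) :
    (List.replicate k (applyMorphism sigma3 w)).flatten
      = applyMorphism sigma3 (List.replicate k w).flatten := by
  induction k with
  | zero => rfl
  | succ k ih => rw [List.replicate_succ, List.replicate_succ, List.flatten_cons,
      List.flatten_cons, am_append, ih]

lemma s0 : sigma3 0 = [0, 0, 0, 1] := rfl
lemma s1 : sigma3 1 = [1, 0, 1] := rfl

lemma am_count (w : List (Fin 2)) :
    (applyMorphism sigma3 w).count 0 = 3 * w.count 0 + w.count 1 ∧
    (applyMorphism sigma3 w).count 1 = w.count 0 + 2 * w.count 1 := by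
  induction w with
  | nil => simp [am_nil]
  | cons a w ih =>
    obtain ⟨h0, h1⟩ := ih
    rw [am_cons]
    fin_cases a
    · simp [s0, h0, h1]; omega
    · simp [s1, h0, h1]; omega

lemma len_count (w : List (Fin 2)) : w.length = w.count 0 + w.count 1 := by
  induction w with
  | nil => rfl
  | cons a w ih => fin_cases a <;> simp [ih] <;> omega

lemma perm_of_count {v w : List (Fin 2)} (h0 : v.count 0 = w.count 0)
    (h1 : v.count 1 = w.count 1) : v.Perm w := by
  rw [List.perm_iff_count]
  intro a
  fin_cases a <;> assumption

/-- the weight of a word; it vanishes modulo 5 on images of letters -/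
def wt (p : List (Fin 2)) : ℕ := p.count 0 + 2 * p.count 1

/-- the remainder of a block, determined by the weight of the cut -/
def rem (g : ℕ) : List (Fin 2) :=
  if g = 0 then [] else if g = 1 then [0, 0, 1] else if g = 2 then [0, 1] else [1]

lemma wt_append (p q : List (Fin 2)) : wt (p ++ q) = wt p + wt q := by
  simp [wt]; omega

lemma cut (W : List (Fin 2)) : ∀ p s, applyMorphism sigma3 W = p ++ s →
    wt p % 5 ≠ 4 ∧ ∃ P, P <+: W ∧ applyMorphism sigma3 P = p ++ rem (wt p % 5) := by
  induction W with
  | nil =>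
    intro p s h
    have : p = [] := by
      rw [am_nil] at h; exact (List.append_eq_nil_iff.mp h.symm).1
    subst this
    exact ⟨by simp [wt], [], by simp, by simp [wt, rem, am_nil]⟩
  | cons a W ih =>
    intro p s h
    rw [am_cons] at h
    have base : p = [] → wt p % 5 ≠ 4 ∧ ∃ P, P <+: (a :: W) ∧
        applyMorphism sigma3 P = p ++ rem (wt p % 5) := by
      rintro rfl
      exact ⟨by simp [wt], [], by simp, by simp [wt, rem, am_nil]⟩
    have step : ∀ p', p = sigma3 a ++ p' → wt p % 5 ≠ 4 ∧ ∃ P, P <+: (a :: W) ∧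
        applyMorphism sigma3 P = p ++ rem (wt p % 5) := by
      rintro p' rfl
      rw [List.append_assoc] at h
      obtain ⟨h1, P, hP, h2⟩ := ih p' s (List.append_cancel_left h)
      have e : wt (sigma3 a ++ p') % 5 = wt p' % 5 := by
        rw [wt_append]
        fin_cases a
        · simp [s0, wt]
        · simp [s1, wt]
      rw [e]
      refine ⟨h1, a :: P, by simpa using hP, ?_⟩
      rw [am_cons, h2, List.append_assoc]
    have single : ∀ q, q = sigma3 a → [a] <+: (a :: W) ∧ applyMorphism sigma3 [a] = q := by
      rintro q rfl
      exact ⟨by simp, by simp [applyMorphism]⟩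
    fin_cases a
    · rcases p with _ | ⟨x, _ | ⟨y, _ | ⟨z, _ | ⟨t, p⟩⟩⟩⟩
      · exact base rfl
      all_goals simp [s0] at h
      · obtain ⟨rfl, -⟩ := h
        exact ⟨by decide, [0], by simp, by decide⟩
      · obtain ⟨rfl, rfl, -⟩ := h
        exact ⟨by decide, [0], by simp, by decide⟩
      · obtain ⟨rfl, rfl, rfl, -⟩ := h
        exact ⟨by decide, [0], by simp, by decide⟩
      · obtain ⟨rfl, rfl, rfl, rfl, -⟩ := h
        exact step p (by simp [s0])
    · rcases p with _ | ⟨x, _ | ⟨y, _ | ⟨z, p⟩⟩⟩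
      · exact base rfl
      all_goals simp [s1] at h
      · obtain ⟨rfl, -⟩ := h
        exact ⟨by decide, [1], by simp, by decide⟩
      · obtain ⟨rfl, rfl, -⟩ := h
        exact ⟨by decide, [1], by simp, by decide⟩
      · obtain ⟨rfl, rfl, rfl, -⟩ := h
        exact step p (by simp [s1])

lemma window (w : List (Fin 2)) (a : Fin 2) (v s : List (Fin 2)) (hv : w.length ≤ v.length)
    (k : ℕ) : ∀ p, (List.replicate k w).flatten = p ++ (v ++ s) → w.count a ≤ v.count a := by
  induction k with
  | zero =>
    intro p h
    have hl := congrArg List.length h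
    simp at hl
    have : w = [] := List.length_eq_zero_iff.mp (by omega)
    simp [this]
  | succ k ih =>
    intro p h
    rw [List.replicate_succ, List.flatten_cons] at h
    rcases List.append_eq_append_iff.mp h with ⟨p', hp, h2⟩ | ⟨q, hw, h2⟩
    · exact ih p' h2
    · have hqv : q.length ≤ v.length := by rw [hw] at hv; simp at hv; omega
      rcases List.append_eq_append_iff.mp h2 with ⟨c, hc, h3⟩ | ⟨c, hc, h3⟩
      · have hc' : c = [] := by
          have := congrArg List.length hc
          simp at this
          exact List.length_eq_zero_iff.mp (by omega)
        subst hc'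
        simp at hc h3
        subst hc
        have hp : p = [] := by
          have := congrArg List.length hw
          simp at this
          exact List.length_eq_zero_iff.mp (by omega)
        simp [hw, hp]
      · have hpc : p.length ≤ c.length := by rw [hw, hc] at hv; simp at hv; omega
        have : p <+: c := by
          cases k with
          | zero =>
            simp at h3
            have hp : p = [] := List.length_eq_zero_iff.mp (by simp [h3.1] at hpc; simp [hpc])
            simp [hp]
          | succ k =>
            refine List.prefix_of_prefix_length_le (l₃ := c ++ s) ?_ (by simp) hpc
            rw [← h3, List.replicate_succ, List.flatten_cons, hw, List.append_assoc]
            simp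
        obtain ⟨t, rfl⟩ := this
        rw [hw, hc]
        simp
        omega

lemma extend {W P Q p u r : List (Fin 2)} (hP : P <+: W) (hQ : Q <+: W)
    (h1 : applyMorphism sigma3 P = p ++ r) (h2 : applyMorphism sigma3 Q = (p ++ u) ++ r)
    (hu : 0 < u.length) : ∃ v, Q = P ++ v ∧ u.count 0 = 3 * v.count 0 + v.count 1 ∧
      u.count 1 = v.count 0 + 2 * v.count 1 := by
  rcases List.prefix_or_prefix_of_prefix hP hQ with ⟨v, rfl⟩ | ⟨v, rfl⟩
  · refine ⟨v, rfl, ?_⟩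
    rw [am_append, h1] at h2
    have e0 := congrArg (List.count 0) h2
    have e1 := congrArg (List.count 1) h2
    simp [List.count_append, (am_count v).1] at e0
    simp [List.count_append, (am_count v).2] at e1
    omega
  · rw [am_append, h2] at h1
    have := congrArg List.length h1
    simp at this
    omega

lemma step (w : List (Fin 2)) (hw : AvoidsAbelianCyc 4 w) :
    AvoidsAbelianCyc 4 (applyMorphism sigma3 w) := by
  rintro m u ⟨hm, f, rfl, hf, hperm⟩ ⟨k, p, s, h⟩
  rw [am_replicate] at h
  set W := (List.replicate k w).flatten with hW
  simp only [List.ofFn_succ, List.ofFn_zero, List.flatten_cons, List.flatten_nil] at h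
  have hc : ∀ i a, (f i).count a = (f 0).count a := fun i a => (hperm i 0).count_eq a
  generalize hu0 : f 0 = u0 at *
  generalize hu1 : f (Fin.succ 0) = u1 at *
  generalize hu2 : f (Fin.succ (Fin.succ 0)) = u2 at *
  generalize hu3 : f (Fin.succ (Fin.succ (Fin.succ 0))) = u3 at *
  have l0 : u0.length = m := hu0 ▸ hf _
  have l1 : u1.length = m := hu1 ▸ hf _
  have l2 : u2.length = m := hu2 ▸ hf _
  have l3 : u3.length = m := hu3 ▸ hf _
  have c1 : ∀ a, u1.count a = u0.count a := hu1 ▸ hc _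
  have c2 : ∀ a, u2.count a = u0.count a := hu2 ▸ hc _
  have c3 : ∀ a, u3.count a = u0.count a := hu3 ▸ hc _
  have w1 : wt u1 = wt u0 := by simp [wt, c1]
  have w2 : wt u2 = wt u0 := by simp [wt, c2]
  have w3 : wt u3 = wt u0 := by simp [wt, c3]
  obtain ⟨g0, P0, hP0, e0⟩ := cut W p (u0 ++ u1 ++ u2 ++ u3 ++ s) (by rw [← h]; simp)
  obtain ⟨g1, P1, hP1, e1⟩ := cut W (p ++ u0) (u1 ++ u2 ++ u3 ++ s) (by rw [← h]; simp)
  obtain ⟨g2, P2, hP2, e2⟩ := cut W (p ++ u0 ++ u1) (u2 ++ u3 ++ s) (by rw [← h]; simp)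
  obtain ⟨g3, P3, hP3, e3⟩ := cut W (p ++ u0 ++ u1 ++ u2) (u3 ++ s) (by rw [← h]; simp)
  obtain ⟨g4, P4, hP4, e4⟩ := cut W (p ++ u0 ++ u1 ++ u2 ++ u3) s (by rw [← h]; simp)
  simp only [wt_append, w1, w2, w3] at g1 g2 g3 g4 e1 e2 e3 e4
  have hd : wt u0 % 5 = 0 := by
    have hx : wt u0 % 5 = 0 ∨ wt u0 % 5 = 1 ∨ wt u0 % 5 = 2 ∨ wt u0 % 5 = 3 ∨ wt u0 % 5 = 4 := by
      omega
    have hy : wt p % 5 = 0 ∨ wt p % 5 = 1 ∨ wt p % 5 = 2 ∨ wt p % 5 = 3 := by omega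
    clear e0 e1 e2 e3 e4
    rcases hx with hx | hx | hx | hx | hx <;> rcases hy with hy | hy | hy | hy <;> omega
  rw [show (wt p + wt u0) % 5 = wt p % 5 by omega] at e1
  rw [show (wt p + wt u0 + wt u0) % 5 = wt p % 5 by omega] at e2
  rw [show (wt p + wt u0 + wt u0 + wt u0) % 5 = wt p % 5 by omega] at e3
  rw [show (wt p + wt u0 + wt u0 + wt u0 + wt u0) % 5 = wt p % 5 by omega] at e4
  obtain ⟨v0, rfl, a0, b0⟩ := extend hP0 hP1 e0 e1 (by omega)
  obtain ⟨v1, rfl, a1, b1⟩ := extend hP1 hP2 e1 e2 (by omega)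
  obtain ⟨v2, rfl, a2, b2⟩ := extend hP2 hP3 e2 e3 (by omega)
  obtain ⟨v3, rfl, a3, b3⟩ := extend hP3 hP4 e3 e4 (by omega)
  rw [c1] at a1 b1
  rw [c2] at a2 b2
  rw [c3] at a3 b3
  have lu := len_count u0
  have lv := len_count v0
  have q1 : v1.Perm v0 := perm_of_count (by omega) (by omega)
  have q2 : v2.Perm v0 := perm_of_count (by omega) (by omega)
  have q3 : v3.Perm v0 := perm_of_count (by omega) (by omega)
  obtain ⟨t, ht⟩ := hP4
  have key : w.length ≤ v0.length := by
    refine hw v0.length (v0 ++ v1 ++ v2 ++ v3) ⟨by omega, ![v0, v1, v2, v3], ?_, ?_, ?_⟩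
      ⟨k, P0, t, ?_⟩
    · simp
    · intro i
      fin_cases i
      · rfl
      · exact q1.length_eq
      · exact q2.length_eq
      · exact q3.length_eq
    · have : ∀ i, (![v0, v1, v2, v3] i).Perm v0 := by
        intro i
        fin_cases i
        · exact List.Perm.refl _
        · exact q1
        · exact q2
        · exact q3
      exact fun i j => (this i).trans (this j).symm
    · rw [← hW, ← ht]; simp
  have k0 := window w 0 v0 (v1 ++ v2 ++ v3 ++ t) key k P0 (by rw [← hW, ← ht]; simp)
  have k1 := window w 1 v0 (v1 ++ v2 ++ v3 ++ t) key k P0 (by rw [← hW, ← ht]; simp)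
  rw [len_count, (am_count w).1, (am_count w).2]
  omega

lemma iter (n : ℕ) : AvoidsAbelianCyc 4 ((applyMorphism sigma3)^[n] [(0 : Fin 2)]) := by
  induction n with
  | zero => exact fun m u hu _ => hu.1
  | succ n ih => rw [Function.iterate_succ_apply']; exact step _ ih

lemma iter_len (n : ℕ) : n + 1 ≤ ((applyMorphism sigma3)^[n] [(0 : Fin 2)]).length := by
  induction n with
  | zero => simp
  | succ n ih =>
    rw [Function.iterate_succ_apply', len_count, (am_count _).1, (am_count _).2]
    rw [len_count] at ih
    omega

end Sigma3Aux

theorem sigma3_iterates_avoid_abelian_4_powers_cyclically :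
    (∀ n : ℕ, AvoidsAbelianCyc 4 ((applyMorphism sigma3)^[n] [(0 : Fin 2)])) ∧
    (∀ n : ℕ, ∃ w : List (Fin 2), n ≤ w.length ∧ AvoidsAbelianCyc 4 w) :=
  ⟨Sigma3Aux.iter, fun n => ⟨_, (Nat.le_succ n).trans (Sigma3Aux.iter_len n), Sigma3Aux.iter n⟩⟩
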